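/- arXiv:1609.00453 — 2 statements merged into one kernel-verified Lean document; each statement's English description precedes it below -/
import Mathlib

section
/- For every pair of nonnegative integers (α, β) with α + β = 29, there exists a partition of the edge set of K_60 minus a perfect matching into α C_3-factors and β C_5-factors. -/
open SimpleGraph

/-- A `C_k`-factor: a spanning 2-regular subgraph all of whose connected
components (necessarily cycles) have exactly `k` vertices. -/
def IsCycleFactor {V : Type*} (H : SimpleGraph V) (k : ℕ) : Prop :=
  (∀ v : V, (H.neighborSet v).ncard = 2) ∧
  (∀ v : V, (H.connectedComponentMk v).supp.ncard = k)

/-- A 1-factor (perfect matching): every vertex has exactly one neighbour. -/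
def IsOneFactor {V : Type*} (H : SimpleGraph V) : Prop :=
  ∀ v : V, (H.neighborSet v).ncard = 1

/-- `F 0, …, F (N-1)` partitions the edge set of `G`. -/
def IsDecompOn {V : Type*} (G : SimpleGraph V) (F : ℕ → SimpleGraph V) (N : ℕ) : Prop :=
  (∀ i < N, F i ≤ G) ∧
  (∀ i < N, ∀ j < N, i ≠ j → Disjoint (F i).edgeSet (F j).edgeSet) ∧
  G.edgeSet = ⋃ i ∈ Set.Iio N, (F i).edgeSet

/-- A Hamilton–Waterloo decomposition of a graph `G` into `α` `C_m`-factors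
and `β` `C_n`-factors. -/
def IsHWGraph {V : Type*} (G : SimpleGraph V) (m n α β : ℕ) : Prop :=
  ∃ F : ℕ → SimpleGraph V, IsDecompOn G F (α + β) ∧
    (∀ i < α, IsCycleFactor (F i) m) ∧
    (∀ i, α ≤ i → i < α + β → IsCycleFactor (F i) n)

/-- `HW v m n α β`: a partition of `E(K_v)` (for `v` odd) or of `E(K_v)` minus a
perfect matching (for `v` even) into `α` `C_m`-factors and `β` `C_n`-factors. -/
def HW (v m n α β : ℕ) : Prop :=
  ∃ I : SimpleGraph (Fin v),
    (Odd v → I = ⊥) ∧ (Even v → IsOneFactor I) ∧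
    IsHWGraph ((⊤ : SimpleGraph (Fin v)) \ I) m n α β

/-- The complete `u`-partite graph with parts of size `g`. -/
def Kpartite (u g : ℕ) : SimpleGraph (Fin u × Fin g) :=
  SimpleGraph.fromRel (fun a b => a.1 ≠ b.1)

/-- The Cayley graph on an additive group with connection set `S`. -/
def cayley (Γ : Type*) [AddGroup Γ] (S : Set Γ) : SimpleGraph Γ :=
  SimpleGraph.fromRel (fun a b => a - b ∈ S)

/-!
A count of degrees shows that `29` factors covering `K₆₀` minus a perfect matching are
edge-disjoint, so it is enough to cover all edges.

Let the vertices be `(ZMod 3 × ZMod 5) × 𝔽₄`. For `c ∈ 𝔽₄` the edges from `((i, x), y)` to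
`((i + 1, x'), ω y + c)` form four copies of `K₅,₅,₅`, which splits into `t` triangle factors and
`5 - t` pentagon factors for `t = 0, 1, 3, 5`. Taking these edges away for four, two or one values
of `c` leaves a graph which splits into `0 + 9`, into `12 + 7` or `18 + 1`, and into `24 + 0`
triangle and pentagon factors, respectively. Adding up, one reaches every `α`.

All factors are explicit: they are unions of translates of base cycles under a group acting on the
vertices, so that covering needs to be checked at one vertex from each orbit only.
-/

open Function

section PermutationGraphs

variable {V : Type*}

/-- The graph whose edges join each vertex to its image under the permutation `σ`: the union of the
cycles of `σ`. -/
def permGraph (σ : Equiv.Perm V) : SimpleGraph V :=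
  SimpleGraph.fromRel fun u w => σ u = w

/-- All cycles of the permutation `σ` have length `k`, so that `permGraph σ` is a `C_k`-factor when
`3 ≤ k`. -/
def IsUniformCyclic (σ : Equiv.Perm V) (k : ℕ) : Prop :=
  ∀ v, minimalPeriod σ v = k

theorem permGraph_adj {σ : Equiv.Perm V} {u w : V} :
    (permGraph σ).Adj u w ↔ u ≠ w ∧ (σ u = w ∨ σ w = u) :=
  SimpleGraph.fromRel_adj _ u w

instance [DecidableEq V] (σ : Equiv.Perm V) : DecidableRel (permGraph σ).Adj :=
  fun _ _ => decidable_of_iff' _ permGraph_adj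

namespace IsUniformCyclic

variable {σ : Equiv.Perm V} {k : ℕ}

theorem apply_ne (h : IsUniformCyclic σ k) (hk : k ≠ 1) (v : V) : σ v ≠ v := fun hv =>
  hk <| (h v).symm.trans (minimalPeriod_eq_one_iff_isFixedPt.2 hv)

theorem permCongr {W : Type*} (e : V ≃ W) (h : IsUniformCyclic σ k) :
    IsUniformCyclic (e.permCongr σ) k := by
  intro w
  rw [← h (e.symm w), minimalPeriod_eq_minimalPeriod_iff]
  intro n
  have hsemi : Semiconj e σ (e.permCongr σ) := fun v => by simp
  have := (hsemi.iterate_right n).eq (e.symm w)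
  rw [e.apply_symm_apply] at this
  simp only [IsPeriodicPt, IsFixedPt, ← this, ← e.eq_symm_apply]

theorem prodCongr_refl_left (C : Type*) (h : IsUniformCyclic σ k) :
    IsUniformCyclic (Equiv.prodCongr (Equiv.refl C) σ) k := by
  rintro ⟨c, v⟩
  rw [← h v, minimalPeriod_eq_minimalPeriod_iff]
  intro n
  have : (⇑(Equiv.prodCongr (Equiv.refl C) σ)) = Prod.map id σ := rfl
  simp [IsPeriodicPt, IsFixedPt, this, Prod.map_iterate]

theorem permGraph_neighborSet (h : IsUniformCyclic σ k) (hk : k ≠ 1) (v : V) :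
    (permGraph σ).neighborSet v = {σ v, σ.symm v} := by
  ext w
  have := h.apply_ne hk v
  have := h.apply_ne hk w
  simp only [SimpleGraph.mem_neighborSet, permGraph_adj, Set.mem_insert_iff,
    Set.mem_singleton_iff, Equiv.eq_symm_apply]
  grind

theorem isOneFactor (h : IsUniformCyclic σ 2) : IsOneFactor (permGraph σ) := by
  intro v
  have hsq : σ.symm v = σ v := by
    rw [Equiv.symm_apply_eq]
    have := isPeriodicPt_minimalPeriod σ v
    rw [h v] at this
    exact this.symm
  rw [h.permGraph_neighborSet (by decide), hsq, Set.pair_eq_singleton, Set.ncard_singleton]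

theorem reachable_iff_sameCycle (h : IsUniformCyclic σ k) (hk : k ≠ 1) {u w : V} :
    (permGraph σ).Reachable u w ↔ σ.SameCycle u w := by
  have step (v : V) : (permGraph σ).Reachable v (σ v) :=
    (permGraph_adj.2 ⟨(h.apply_ne hk v).symm, .inl rfl⟩).reachable
  constructor
  · rw [SimpleGraph.reachable_iff_reflTransGen]
    intro huw
    induction huw with
    | refl => exact Equiv.Perm.SameCycle.refl _ _
    | tail _ hadj ih =>
      obtain rfl | rfl := (permGraph_adj.1 hadj).2
      · exact Equiv.Perm.sameCycle_apply_right.2 ih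
      · exact Equiv.Perm.sameCycle_apply_right.1 ih
  · rintro ⟨n, rfl⟩
    induction n with
    | zero => rfl
    | succ n ih =>
      rw [add_comm, zpow_add, zpow_one]
      exact ih.trans (step _)
    | pred n ih =>
      refine ih.trans (SimpleGraph.Reachable.symm ?_)
      convert step ((σ ^ (-(n : ℤ) - 1)) u) using 1
      rw [← Equiv.Perm.mul_apply, ← zpow_one_add]
      congr 2
      ring

theorem isCycleFactor (h : IsUniformCyclic σ k) (hk : 3 ≤ k) : IsCycleFactor (permGraph σ) k := by
  constructor
  · intro v
    rw [h.permGraph_neighborSet (by lia), Set.ncard_pair]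
    intro hv
    have hper : IsPeriodicPt σ 2 v := by
      change σ (σ v) = v
      rw [hv, Equiv.apply_symm_apply]
    have := h v ▸ hper.minimalPeriod_le two_pos
    lia
  · intro v
    have hsupp : ((permGraph σ).connectedComponentMk v).supp =
        MulAction.orbit (Subgroup.zpowers σ) v := by
      ext w
      rw [SimpleGraph.ConnectedComponent.mem_supp_iff, SimpleGraph.ConnectedComponent.eq,
        h.reachable_iff_sameCycle (by lia), Equiv.Perm.sameCycle_comm, MulAction.mem_orbit_iff]
      simp [Equiv.Perm.SameCycle, Subgroup.exists_zpowers, Subgroup.smul_def]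
    rw [hsupp, ← h v, ← Nat.card_coe_set_eq, Nat.card_congr (MulAction.orbitZPowersEquiv σ v),
      Nat.card_zmod]
    rfl

end IsUniformCyclic

end PermutationGraphs

section RegularCovers

variable {V ι : Type*} [Finite V] [Fintype ι] {d : ℕ}

theorem subset_and_pairwise_disjoint_of_subset_iUnion {N : Set V} {A : ι → Set V}
    (hA : ∀ i, (A i).ncard = d) (hN : N.ncard = d * Fintype.card ι) (hsub : N ⊆ ⋃ i, A i) :
    (∀ i, A i ⊆ N) ∧ Pairwise (Disjoint on A) := by
  let point : (Σ i, A i) → V := fun p => p.2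
  have hrange : point '' Set.univ = ⋃ i, A i := by ext; simp [point]
  have hcard : (Set.univ : Set (Σ i, A i)).ncard = N.ncard := by
    simp [Set.ncard_univ, Nat.card_sigma, Nat.card_coe_set_eq, hA, hN, mul_comm]
  have heq : N = ⋃ i, A i :=
    Set.eq_of_subset_of_ncard_le hsub (hcard ▸ hrange ▸ Set.ncard_image_le)
  have hinj : Injective point :=
    Set.injOn_univ.1 (Set.injOn_of_ncard_image_eq (by rw [hrange, ← heq, hcard]))
  refine ⟨fun i => heq ▸ Set.subset_iUnion A i,
    fun i j hij => Set.disjoint_left.2 fun v hi hj => ?_⟩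
  exact hij (congrArg Sigma.fst (@hinj ⟨i, v, hi⟩ ⟨j, v, hj⟩ rfl))

theorem le_and_pairwise_disjoint_of_le_iSup {G : SimpleGraph V} {F : ι → SimpleGraph V}
    (hF : ∀ i v, ((F i).neighborSet v).ncard = d)
    (hG : ∀ v, (G.neighborSet v).ncard = d * Fintype.card ι) (hle : G ≤ ⨆ i, F i) :
    (∀ i, F i ≤ G) ∧ Pairwise (Disjoint on F) := by
  have key (v : V) := subset_and_pairwise_disjoint_of_subset_iUnion (fun i => hF i v) (hG v)
    fun w hw => by simpa using hle hw
  refine ⟨fun i v w h => (key v).1 i h, fun i j hij => ?_⟩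
  rw [onFun, SimpleGraph.disjoint_left]
  exact fun v w hi hj => Set.disjoint_left.1 ((key v).2 hij) hi hj

theorem isDecompOn_of_forall_exists_adj {G : SimpleGraph V} {F : ℕ → SimpleGraph V} {N : ℕ}
    (hF : ∀ i < N, ∀ v, ((F i).neighborSet v).ncard = d)
    (hG : ∀ v, (G.neighborSet v).ncard = d * N)
    (hcover : ∀ u w, G.Adj u w → ∃ i < N, (F i).Adj u w) : IsDecompOn G F N := by
  obtain ⟨hle, hdisj⟩ := le_and_pairwise_disjoint_of_le_iSup (F := fun i : Fin N => F i)
    (fun i => hF i i.2) (by simpa using hG) fun u w huw => by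
      obtain ⟨i, hi, hadj⟩ := hcover u w huw
      exact SimpleGraph.iSup_adj.2 ⟨⟨i, hi⟩, hadj⟩
  refine ⟨fun i hi => hle ⟨i, hi⟩, fun i hi j hj hij => ?_, ?_⟩
  · rw [SimpleGraph.disjoint_edgeSet]
    exact @hdisj ⟨i, hi⟩ ⟨j, hj⟩ (by simpa using hij)
  · ext e
    induction e with | h u w
    simp only [SimpleGraph.mem_edgeSet, Set.mem_iUnion, Set.mem_Iio, exists_prop]
    exact ⟨hcover u w, fun ⟨i, hi, hadj⟩ => hle ⟨i, hi⟩ hadj⟩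

end RegularCovers

section Covers

variable {V : Type*}

/-- `G` is covered by `N` `C_k`-factors, each given as a permutation. The factors may overlap or use
edges outside `G`; for a regular graph covered by just enough factors this cannot happen, see
`HWCover.isHWGraph`. -/
def CycleCover (G : SimpleGraph V) (k N : ℕ) : Prop :=
  ∃ (ι : Type) (_ : Fintype ι) (σ : ι → Equiv.Perm V), Fintype.card ι = N ∧
    (∀ i, IsUniformCyclic (σ i) k) ∧ G ≤ ⨆ i, permGraph (σ i)

/-- `G` is covered by `a` `C_m`-factors and `b` `C_n`-factors. -/
def HWCover (G : SimpleGraph V) (m n a b : ℕ) : Prop :=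
  ∃ G₁ G₂ : SimpleGraph V, G ≤ G₁ ⊔ G₂ ∧ CycleCover G₁ m a ∧ CycleCover G₂ n b

namespace CycleCover

variable {G G' : SimpleGraph V} {k N N' : ℕ}

theorem bot (k : ℕ) : CycleCover (⊥ : SimpleGraph V) k 0 :=
  ⟨Empty, inferInstance, Empty.elim, rfl, fun i => i.elim, bot_le⟩

theorem mono (hle : G' ≤ G) (h : CycleCover G k N) : CycleCover G' k N := by
  obtain ⟨ι, _, σ, hcard, hσ, hG⟩ := h
  exact ⟨ι, _, σ, hcard, hσ, hle.trans hG⟩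

theorem permGraph {σ : Equiv.Perm V} (h : IsUniformCyclic σ k) :
    CycleCover (permGraph σ) k 1 :=
  ⟨Unit, inferInstance, fun _ => σ, rfl, fun _ => h, le_iSup_of_le () le_rfl⟩

theorem sup (h : CycleCover G k N) (h' : CycleCover G' k N') :
    CycleCover (G ⊔ G') k (N + N') := by
  obtain ⟨ι, _, σ, rfl, hσ, hle⟩ := h
  obtain ⟨ι', _, σ', rfl, hσ', hle'⟩ := h'
  refine ⟨ι ⊕ ι', inferInstance, Sum.elim σ σ', Fintype.card_sum, Sum.rec hσ hσ', ?_⟩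
  rw [iSup_sum]
  exact sup_le_sup hle hle'

theorem exists_isCycleFactor (h : CycleCover G k N) (hk : 3 ≤ k) :
    ∃ F : ℕ → SimpleGraph V, (∀ i < N, IsCycleFactor (F i) k) ∧
      ∀ u w, G.Adj u w → ∃ i < N, (F i).Adj u w := by
  obtain ⟨ι, _, σ, rfl, hσ, hle⟩ := h
  let e := Fintype.equivFin ι
  refine ⟨fun i => if h : i < Fintype.card ι then _root_.permGraph (σ (e.symm ⟨i, h⟩)) else ⊥,
    fun i hi => ?_, fun u w huw => ?_⟩
  · simpa only [hi, dite_true] using (hσ _).isCycleFactor hk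
  · obtain ⟨i, hi⟩ := SimpleGraph.iSup_adj.1 (hle huw)
    exact ⟨e i, (e i).2, by simpa using hi⟩

theorem copies {C W : Type*} {H : SimpleGraph W} (h : CycleCover G k N) (f : C × V ≃ W)
    (hH : ∀ c v c' v', H.Adj (f (c, v)) (f (c', v')) → c = c' ∧ G.Adj v v') :
    CycleCover H k N := by
  obtain ⟨ι, _, σ, hcard, hσ, hle⟩ := h
  refine ⟨ι, inferInstance, fun i => f.permCongr (Equiv.prodCongr (Equiv.refl C) (σ i)), hcard,
    fun i => ((hσ i).prodCongr_refl_left C).permCongr f, fun u w huw => ?_⟩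
  obtain ⟨⟨c, v⟩, rfl⟩ := f.surjective u
  obtain ⟨⟨c', v'⟩, rfl⟩ := f.surjective w
  obtain ⟨rfl, hvv'⟩ := hH c v c' v' huw
  obtain ⟨i, hi⟩ := SimpleGraph.iSup_adj.1 (hle hvv')
  refine SimpleGraph.iSup_adj.2 ⟨i, permGraph_adj.2 ⟨huw.ne, ?_⟩⟩
  simpa [permGraph_adj, huw.ne, hvv'.ne] using hi

end CycleCover

namespace HWCover

variable {G G' : SimpleGraph V} {m n a b a' b' : ℕ}

theorem of_left (n : ℕ) (h : CycleCover G m a) : HWCover G m n a 0 :=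
  ⟨G, ⊥, le_sup_left, h, .bot n⟩

theorem of_right (m : ℕ) (h : CycleCover G n b) : HWCover G m n 0 b :=
  ⟨⊥, G, le_sup_right, .bot m, h⟩

theorem mono (hle : G' ≤ G) (h : HWCover G m n a b) : HWCover G' m n a b := by
  obtain ⟨G₁, G₂, hG, h₁, h₂⟩ := h
  exact ⟨G₁, G₂, hle.trans hG, h₁, h₂⟩

theorem sup (h : HWCover G m n a b) (h' : HWCover G' m n a' b') :
    HWCover (G ⊔ G') m n (a + a') (b + b') := by
  obtain ⟨G₁, G₂, hG, h₁, h₂⟩ := h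
  obtain ⟨G₁', G₂', hG', h₁', h₂'⟩ := h'
  exact ⟨G₁ ⊔ G₁', G₂ ⊔ G₂', (sup_le_sup hG hG').trans (sup_sup_sup_comm ..).le,
    h₁.sup h₁', h₂.sup h₂'⟩

theorem biSup {ι : Type*} {G : ι → SimpleGraph V} {a b : ι → ℕ}
    (h : ∀ i, HWCover (G i) m n (a i) (b i)) (s : Finset ι) :
    HWCover (⨆ i ∈ s, G i) m n (∑ i ∈ s, a i) (∑ i ∈ s, b i) := by
  classical
  induction s using Finset.induction_on with
  | empty => exact ⟨⊥, ⊥, by simp, .bot m, .bot n⟩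
  | insert i s hi ih =>
    rw [Finset.iSup_insert, Finset.sum_insert hi, Finset.sum_insert hi]
    exact (h i).sup ih

theorem copies {C W : Type*} {H : SimpleGraph W} (h : HWCover G m n a b) (f : C × V ≃ W)
    (hH : ∀ c v c' v', H.Adj (f (c, v)) (f (c', v')) → c = c' ∧ G.Adj v v') :
    HWCover H m n a b := by
  obtain ⟨G₁, G₂, hG, h₁, h₂⟩ := h
  refine ⟨H ⊓ G₁.comap fun w => (f.symm w).2, H ⊓ G₂.comap fun w => (f.symm w).2,
    fun u w huw => ?_, h₁.copies f fun c v c' v' hvv' => ?_, h₂.copies f fun c v c' v' hvv' => ?_⟩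
  · obtain ⟨⟨c, v⟩, rfl⟩ := f.surjective u
    obtain ⟨⟨c', v'⟩, rfl⟩ := f.surjective w
    simpa [huw] using hG (hH c v c' v' huw).2
  · exact ⟨(hH c v c' v' hvv'.1).1, by simpa using hvv'.2⟩
  · exact ⟨(hH c v c' v' hvv'.1).1, by simpa using hvv'.2⟩

theorem isHWGraph [Finite V] (h : HWCover G m n a b) (hm : 3 ≤ m) (hn : 3 ≤ n)
    (hdeg : ∀ v, (G.neighborSet v).ncard = 2 * (a + b)) : IsHWGraph G m n a b := by
  obtain ⟨G₁, G₂, hG, h₁, h₂⟩ := h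
  obtain ⟨F₁, hF₁, hle₁⟩ := h₁.exists_isCycleFactor hm
  obtain ⟨F₂, hF₂, hle₂⟩ := h₂.exists_isCycleFactor hn
  let F (i : ℕ) := if i < a then F₁ i else F₂ (i - a)
  have hFm (i) (hi : i < a) : IsCycleFactor (F i) m := by
    simpa only [F, if_pos hi] using hF₁ i hi
  have hFn (i) (hai : a ≤ i) (hi : i < a + b) : IsCycleFactor (F i) n := by
    simpa only [F, if_neg hai.not_gt] using hF₂ (i - a) (by lia)
  have hreg (i) (hi : i < a + b) (v) : ((F i).neighborSet v).ncard = 2 :=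
    (lt_or_ge i a).elim (fun h => (hFm i h).1 v) fun h => (hFn i h hi).1 v
  refine ⟨F, isDecompOn_of_forall_exists_adj hreg hdeg fun u w huw => ?_, hFm, hFn⟩
  obtain h | h := hG huw
  · obtain ⟨i, hi, hadj⟩ := hle₁ u w h
    exact ⟨i, by lia, by simpa only [F, if_pos hi] using hadj⟩
  · obtain ⟨i, hi, hadj⟩ := hle₂ u w h
    exact ⟨a + i, by lia, by simpa [F] using hadj⟩

end HWCover

theorem ncard_neighborSet_compl_of_isOneFactor [Fintype V] {I : SimpleGraph V} (hI : IsOneFactor I)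
    (v : V) : ((⊤ \ I).neighborSet v).ncard = Fintype.card V - 2 := by
  have : (⊤ \ I).neighborSet v = Set.univ \ insert v (I.neighborSet v) := by
    ext w
    simp [eq_comm]
  rw [this, Set.ncard_sdiff (Set.subset_univ _), Set.ncard_univ, Nat.card_eq_fintype_card,
    Set.ncard_insert_of_notMem (by simp), hI v]

theorem HW.of_hwCover [Fintype V] {μ : Equiv.Perm V} (hμ : IsUniformCyclic μ 2) {m n a b : ℕ}
    (hm : 3 ≤ m) (hn : 3 ≤ n) (hcard : Fintype.card V = 2 * (a + b) + 2)
    (h : HWCover (⊤ \ permGraph μ) m n a b) : HW (Fintype.card V) m n a b := by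
  let e := Fintype.equivFin V
  have hI : IsOneFactor (permGraph (e.permCongr μ)) := (hμ.permCongr e).isOneFactor
  refine ⟨permGraph (e.permCongr μ), fun hodd => absurd hodd ?_, fun _ => hI, ?_⟩
  · rw [hcard, Nat.not_odd_iff_even]
    exact ⟨a + b + 1, by ring⟩
  refine HWCover.isHWGraph ?_ hm hn fun v => ?_
  · refine h.copies ((Equiv.uniqueProd V Unit).trans e) fun c v c' v' hvv' => ⟨rfl, ?_⟩
    simpa [permGraph_adj] using hvv'
  · rw [ncard_neighborSet_compl_of_isOneFactor hI, Fintype.card_fin, hcard, Nat.add_sub_cancel]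

end Covers

section Starters

/-- The union of the closed walks `B t i 0, B t i 1, …, B t i (k - 1), B t i 0`. The walks with the
same `t` are meant to form a factor. -/
def closedWalks {V τ ι : Type*} {k : ℕ} [NeZero k] (B : τ → ι → Fin k → V) : SimpleGraph V :=
  SimpleGraph.fromRel fun u w => ∃ t i j, B t i j = u ∧ B t i (j + 1) = w

instance {V τ ι : Type*} [Fintype τ] [Fintype ι] {k : ℕ} [NeZero k] [DecidableEq V]
    (B : τ → ι → Fin k → V) : DecidableRel (closedWalks B).Adj :=
  fun _ _ => decidable_of_iff' _ (SimpleGraph.fromRel_adj ..)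

theorem isUniformCyclic_addLeft {A : Type*} [AddGroup A] (a : A) :
    IsUniformCyclic (Equiv.addLeft a) (addOrderOf a) := by
  intro v
  rw [addOrderOf, minimalPeriod_eq_minimalPeriod_iff]
  intro n
  simp [IsPeriodicPt, IsFixedPt]

theorem isUniformCyclic_addLeft_of_prime {A : Type*} [AddGroup A] {a : A} {p : ℕ} (hp : p.Prime)
    (ha : p • a = 0) (ha' : a ≠ 0) : IsUniformCyclic (Equiv.addLeft a) p :=
  have := Fact.mk hp
  addOrderOf_eq_prime ha ha' ▸ isUniformCyclic_addLeft a

theorem isUniformCyclic_addLeft_one (k : ℕ) [NeZero k] :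
    IsUniformCyclic (Equiv.addLeft (1 : Fin k)) k := by
  obtain _ | k := k
  · exact absurd rfl (NeZero.ne 0)
  conv => arg 2; rw [← ZMod.addOrderOf_one (k + 1)]
  exact isUniformCyclic_addLeft (1 : ZMod (k + 1))

theorem CycleCover.closedWalks {V ι : Type*} {τ : Type} [Fintype τ] {k : ℕ} [NeZero k]
    {B : τ → ι → Fin k → V} (hB : ∀ t, Bijective fun p : ι × Fin k => B t p.1 p.2) :
    CycleCover (closedWalks B) k (Fintype.card τ) := by
  let e (t : τ) : ι × Fin k ≃ V := Equiv.ofBijective _ (hB t)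
  let shift : Equiv.Perm (ι × Fin k) := Equiv.prodCongr (Equiv.refl ι) (Equiv.addLeft 1)
  have shift_B (t : τ) (i : ι) (j : Fin k) :
      (e t).permCongr shift (B t i j) = B t i (j + 1) := by
    have : B t i j = e t (i, j) := rfl
    rw [this, Equiv.permCongr_apply, Equiv.symm_apply_apply, add_comm]
    rfl
  refine ⟨τ, inferInstance, fun t => (e t).permCongr shift, rfl,
    fun t => ((isUniformCyclic_addLeft_one k).prodCongr_refl_left ι).permCongr (e t), ?_⟩
  intro u w huw
  obtain ⟨hne, ⟨t, i, j, rfl, rfl⟩ | ⟨t, i, j, rfl, rfl⟩⟩ := (SimpleGraph.fromRel_adj ..).1 huw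
  · exact SimpleGraph.iSup_adj.2 ⟨t, permGraph_adj.2 ⟨hne, .inl (shift_B t i j)⟩⟩
  · exact SimpleGraph.iSup_adj.2 ⟨t, permGraph_adj.2 ⟨hne, .inr (shift_B t i j)⟩⟩

variable {A R : Type*} [AddCommGroup A]

/-- The union of all translates, by elements of `A`, of the closed walks
`B t i 0, B t i 1, …, B t i (k - 1), B t i 0`. The walks with the same `t` are meant to give, by
some of their translates, a factor. -/
def develop {τ ι : Type*} {k : ℕ} [NeZero k] (B : τ → ι → Fin k → A × R) : SimpleGraph (A × R) :=
  SimpleGraph.fromRel fun u w => ∃ t i j, (B t i j).2 = u.2 ∧ (B t i (j + 1)).2 = w.2 ∧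
    (B t i (j + 1)).1 - (B t i j).1 = w.1 - u.1

/-- `S` makes a factor out of the base cycles with the same `t`, and `T` moves that factor. -/
theorem CycleCover.develop {A τ : Type} {ι : Type*} [AddCommGroup A] [Fintype τ] {k : ℕ}
    [NeZero k] {B : τ → ι → Fin k → A × R} (S T : Finset A) (hST : ∀ a, ∃ y ∈ T, ∃ x ∈ S, y + x = a)
    (hB : ∀ t, Bijective fun p : (S × ι) × Fin k =>
      ((p.1.1 : A) + (B t p.1.2 p.2).1, (B t p.1.2 p.2).2)) :
    CycleCover (develop B) k (Fintype.card τ * T.card) := by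
  let B' (t : τ × T) (p : S × ι) (j : Fin k) : A × R :=
    (t.2 + (p.1 + (B t.1 p.2 j).1), (B t.1 p.2 j).2)
  have hB' (t : τ × T) : Bijective fun p : (S × ι) × Fin k => B' t p.1 p.2 :=
    (Equiv.prodCongr (Equiv.addLeft (t.2 : A)) (Equiv.refl R)).bijective.comp (hB t.1)
  rw [← Fintype.card_coe, ← Fintype.card_prod]
  refine (CycleCover.closedWalks hB').mono fun u w huw => ?_
  have edge {u w : A × R} {t : τ} {i : ι} {j : Fin k} (hu : (B t i j).2 = u.2)
      (hw : (B t i (j + 1)).2 = w.2) (huw : (B t i (j + 1)).1 - (B t i j).1 = w.1 - u.1) :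
      ∃ t p j, B' t p j = u ∧ B' t p (j + 1) = w := by
    obtain ⟨y, hy, x, hx, hyx⟩ := hST (u.1 - (B t i j).1)
    refine ⟨(t, ⟨y, hy⟩), (⟨x, hx⟩, i), j, Prod.ext ?_ hu, Prod.ext ?_ hw⟩
    · exact (add_assoc ..).symm.trans (by rw [hyx, sub_add_cancel])
    · calc y + (x + (B t i (j + 1)).1)
        _ = u.1 - (B t i j).1 + (B t i (j + 1)).1 := by rw [← add_assoc, hyx]
        _ = u.1 + ((B t i (j + 1)).1 - (B t i j).1) := by abel
        _ = w.1 := by rw [huw, add_sub_cancel]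
  rw [_root_.develop, SimpleGraph.fromRel_adj] at huw
  obtain ⟨hne, ⟨t, i, j, hu, hw, h⟩ | ⟨t, i, j, hw, hu, h⟩⟩ := huw
  · exact (SimpleGraph.fromRel_adj ..).2 ⟨hne, .inl (edge hu hw h)⟩
  · exact (SimpleGraph.fromRel_adj ..).2 ⟨hne, .inr (edge hw hu h)⟩

instance {τ ι : Type*} [Fintype τ] [Fintype ι] {k : ℕ} [NeZero k] [DecidableEq A] [DecidableEq R]
    (B : τ → ι → Fin k → A × R) : DecidableRel (develop B).Adj :=
  fun _ _ => decidable_of_iff' _ (SimpleGraph.fromRel_adj ..)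

/-- Invariance of `G` under the translations of `A × R` by elements of `A`. -/
def IsShiftInvariant (G : SimpleGraph (A × R)) : Prop :=
  ∀ a u w, G.Adj (a + u.1, u.2) (a + w.1, w.2) ↔ G.Adj u w

namespace IsShiftInvariant

variable {G G' : SimpleGraph (A × R)}

theorem le_of_forall_zero (hG : IsShiftInvariant G) (hG' : IsShiftInvariant G')
    (h : ∀ r w, G.Adj (0, r) w → G'.Adj (0, r) w) : G ≤ G' := by
  intro u w huw
  rw [← hG (-u.1), neg_add_cancel] at huw
  rw [← hG' (-u.1), neg_add_cancel]
  exact h _ _ huw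

theorem sup (hG : IsShiftInvariant G) (hG' : IsShiftInvariant G') : IsShiftInvariant (G ⊔ G') :=
  fun a u w => or_congr (hG a u w) (hG' a u w)

theorem develop {τ ι : Type*} {k : ℕ} [NeZero k] (B : τ → ι → Fin k → A × R) :
    IsShiftInvariant (develop B) := fun a u w => by
  simp [_root_.develop, Prod.ext_iff]

theorem permGraph_addLeft [AddCommGroup R] (v : A × R) :
    IsShiftInvariant (permGraph (Equiv.addLeft v)) := fun a u w => by
  simp [permGraph_adj, Prod.ext_iff, add_left_comm]

end IsShiftInvariant

end Starters

section EquipartiteGraphs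

/-- The complete multipartite graph on `I × X` with parts `{i} × X`. -/
def equipartiteGraph (I X : Type*) : SimpleGraph (I × X) :=
  (⊤ : SimpleGraph I).comap Prod.fst

instance (I X : Type*) [DecidableEq I] : DecidableRel (equipartiteGraph I X).Adj :=
  fun u w => inferInstanceAs (Decidable (u.1 ≠ w.1))

theorem isShiftInvariant_equipartiteGraph (A R : Type*) [AddCommGroup A] :
    IsShiftInvariant (equipartiteGraph A R) := fun a u w => by
  simp [equipartiteGraph]

/-- The graph `K₅,₅,₅`. -/
abbrev tripartiteGraph : SimpleGraph (ZMod 3 × ZMod 5) :=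
  equipartiteGraph (ZMod 3) (ZMod 5)

/-- Base pentagons of a decomposition of `K₂₀` minus a perfect matching into `9` factors, which is
cyclic over `ZMod 9` with `none` as fixed point. -/
def pentagons20 : Fin 4 → Fin 5 → Option (ZMod 9) × ZMod 2 :=
  ![![(some 0, 0), (some 1, 0), (some 0, 1), (some 1, 1), (some 4, 0)],
    ![(some 2, 1), (some 4, 1), (some 7, 1), (none, 0), (some 6, 0)],
    ![(some 3, 0), (some 5, 1), (some 7, 0), (some 5, 0), (some 6, 1)],
    ![(some 2, 0), (some 8, 0), (some 3, 1), (some 8, 1), (none, 1)]]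

theorem cycleCover_equipartiteGraph_ten_two :
    CycleCover (equipartiteGraph (Option (ZMod 9)) (ZMod 2)) 5 9 := by
  let B (t : ZMod 9) (i : Fin 4) (j : Fin 5) : Option (ZMod 9) × ZMod 2 :=
    ((pentagons20 i j).1.map (t + ·), (pentagons20 i j).2)
  have hB (t : ZMod 9) : Bijective fun p : Fin 4 × Fin 5 => B t p.1 p.2 := by
    revert t
    decide +kernel
  have hcover : ∀ u w, (equipartiteGraph (Option (ZMod 9)) (ZMod 2)).Adj u w →
      (closedWalks B).Adj u w := by
    decide +kernel
  exact (CycleCover.closedWalks hB).mono fun u w => hcover u w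

theorem hwCover_tripartiteGraph_five_zero : HWCover tripartiteGraph 3 5 5 0 := by
  let lines (d x : ZMod 5) (j : Fin 3) : ZMod 3 × ZMod 5 := (j, x + j.val * d)
  have hlines (d : ZMod 5) : Bijective fun p : ZMod 5 × Fin 3 => lines d p.1 p.2 := by
    revert d
    decide +kernel
  have hcover : ∀ u w, tripartiteGraph.Adj u w → (closedWalks lines).Adj u w := by
    decide +kernel
  exact .of_left 5 ((CycleCover.closedWalks hlines).mono fun u w => hcover u w)

/-- A factor of `K₅,₅,₅`, which is meant to be translated by `ZMod 3`. -/
def triangles32 : Fin 1 → Fin 5 → Fin 3 → ZMod 3 × ZMod 5 :=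
  ![![![(0, 0), (1, 0), (2, 1)],
      ![(0, 1), (1, 1), (2, 4)],
      ![(0, 2), (1, 2), (2, 3)],
      ![(0, 3), (1, 3), (2, 0)],
      ![(0, 4), (1, 4), (2, 2)]]]

/-- Pentagons each of whose orbits under `ZMod 3` is a factor of `K₅,₅,₅`. Together they
have the edges left over by the three translates of `triangles32`. -/
def transversals32 : Fin 2 → Fin 1 → Fin 5 → ZMod 3 × ZMod 5 :=
  ![![![(0, 2), (2, 0), (1, 4), (0, 3), (2, 1)]],
    ![![(0, 4), (1, 3), (2, 1), (1, 2), (2, 0)]]]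

theorem hwCover_tripartiteGraph_three_two : HWCover tripartiteGraph 3 5 3 2 := by
  have hcover : tripartiteGraph ≤ develop triangles32 ⊔ develop transversals32 :=
    (isShiftInvariant_equipartiteGraph _ _).le_of_forall_zero (.sup (.develop _) (.develop _))
      (by decide +kernel)
  exact ⟨_, _, hcover, .develop {0} Finset.univ (by decide) (by decide +kernel),
    .develop Finset.univ {0} (by decide) (by decide +kernel)⟩

/-- Pentagons each of whose orbits under `ZMod 3` is a factor of `K₅,₅,₅`. These four factors leave
over the triangles `{(0, x), (1, x), (2, x)}`. The entries are `(± f j, m * j)` with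
`f = (0, 1, 2, 0, 1)` and `m = 1, 2`. -/
def transversals14 : Fin 4 → Fin 1 → Fin 5 → ZMod 3 × ZMod 5 :=
  ![![![(0, 0), (1, 1), (2, 2), (0, 3), (1, 4)]],
    ![![(0, 0), (1, 2), (2, 4), (0, 1), (1, 3)]],
    ![![(0, 0), (2, 1), (1, 2), (0, 3), (2, 4)]],
    ![![(0, 0), (2, 2), (1, 4), (0, 1), (2, 3)]]]

theorem hwCover_tripartiteGraph_one_four : HWCover tripartiteGraph 3 5 1 4 := by
  have hcover : tripartiteGraph ≤ permGraph (Equiv.addLeft (1, 0)) ⊔ develop transversals14 :=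
    (isShiftInvariant_equipartiteGraph _ _).le_of_forall_zero
      (.sup (.permGraph_addLeft _) (.develop _)) (by decide +kernel)
  exact ⟨_, _, hcover,
    .permGraph (isUniformCyclic_addLeft_of_prime Nat.prime_three (by decide) (by decide)),
    .develop Finset.univ {0} (by decide) (by decide +kernel)⟩

/-- A factor of `K₅,₅,₅`, which is meant to be translated by `ZMod 3`. -/
def pentagons05 : Fin 1 → Fin 3 → Fin 5 → ZMod 3 × ZMod 5 :=
  ![![![(0, 0), (1, 0), (2, 4), (1, 4), (2, 2)],
      ![(0, 1), (2, 0), (1, 3), (0, 4), (2, 1)],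
      ![(0, 2), (1, 1), (0, 3), (2, 3), (1, 2)]]]

/-- Pentagons each of whose orbits under `ZMod 3` is a factor of `K₅,₅,₅`. Together they
have the edges left over by the three translates of `pentagons05`. -/
def transversals05 : Fin 2 → Fin 1 → Fin 5 → ZMod 3 × ZMod 5 :=
  ![![![(0, 0), (2, 1), (0, 3), (1, 2), (2, 4)]],
    ![![(0, 2), (2, 0), (0, 3), (1, 4), (2, 1)]]]

theorem hwCover_tripartiteGraph_zero_five : HWCover tripartiteGraph 3 5 0 5 := by
  have hcover : tripartiteGraph ≤ develop pentagons05 ⊔ develop transversals05 :=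
    (isShiftInvariant_equipartiteGraph _ _).le_of_forall_zero (.sup (.develop _) (.develop _))
      (by decide +kernel)
  have hpentagons : CycleCover (develop pentagons05) 5 3 :=
    .develop {0} Finset.univ (by decide) (by decide +kernel)
  have htransversals : CycleCover (develop transversals05) 5 2 :=
    .develop Finset.univ {0} (by decide) (by decide +kernel)
  exact .of_right 3 ((hpentagons.sup htransversals).mono hcover)

/-- The numbers of triangle factors in the decompositions of `K₅,₅,₅` above. -/
def triangleCount : Fin 4 → ℕ :=
  ![0, 1, 3, 5]

theorem hwCover_tripartiteGraph : ∀ t : Fin 4,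
    HWCover tripartiteGraph 3 5 (triangleCount t) (5 - triangleCount t)
  | 0 => hwCover_tripartiteGraph_zero_five
  | 1 => hwCover_tripartiteGraph_one_four
  | 2 => hwCover_tripartiteGraph_three_two
  | 3 => hwCover_tripartiteGraph_five_zero

end EquipartiteGraphs

section SixtyVertices

/-- The group acting on the `60` vertices `Shift × Row`. -/
abbrev Shift := ZMod 3 × ZMod 5

/-- The four orbits of `Shift`, seen as the field with four elements with basis `1, ω` over
`ZMod 2`, where `ω ^ 2 = ω + 1`. -/
abbrev Row := ZMod 2 × ZMod 2

/-- The perfect matching to be left out, given as an involution. -/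
def matching : Equiv.Perm (Shift × Row) :=
  Equiv.addLeft (0, (0, 1))

/-- The map `y ↦ ω * y + c` of the field with four elements. -/
def affinePerm (c : Row) : Equiv.Perm Row where
  toFun y := (y.2, y.1 + y.2) + c
  invFun y := ((y - c).2 - (y - c).1, (y - c).1)
  left_inv y := by simp
  right_inv y := by ext <;> simp

/-- The edges from `((i, x), y)` to `((i + 1, x'), ω * y + c)`. Since `1 + ω + ω ^ 2 = 0`, the map
`y ↦ ω * y + c` has order three and these edges form four copies of `K₅,₅,₅`. -/
def block (c : Row) : SimpleGraph (Shift × Row) :=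
  SimpleGraph.fromRel fun u w => w.1.1 - u.1.1 = 1 ∧ w.2 = affinePerm c u.2

instance (c : Row) : DecidableRel (block c).Adj :=
  fun _ _ => decidable_of_iff' _ (SimpleGraph.fromRel_adj ..)

theorem affinePerm_pow_val_one_add : ∀ (c : Row) (i : ZMod 3),
    affinePerm c ^ (1 + i).val = affinePerm c * affinePerm c ^ i.val := by
  decide +kernel

theorem HWCover.block {m n a b : ℕ} (h : HWCover tripartiteGraph m n a b) (c : Row) :
    HWCover (block c) m n a b := by
  let f : Row × ZMod 3 × ZMod 5 ≃ Shift × Row :=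
    (Equiv.prodComm _ _).trans <|
      Equiv.prodShear (Equiv.refl _) fun p => affinePerm c ^ p.1.val
  have eq_of_step {y y' : Row} {i i' : ZMod 3} (hi : i' - i = 1)
      (hy : (affinePerm c ^ i'.val) y' = affinePerm c ((affinePerm c ^ i.val) y)) :
      y = y' ∧ i ≠ i' := by
    obtain rfl := sub_eq_iff_eq_add.1 hi
    rw [affinePerm_pow_val_one_add, Equiv.Perm.mul_apply] at hy
    exact ⟨((affinePerm c ^ i.val).injective ((affinePerm c).injective hy)).symm, by simp⟩
  refine h.copies f ?_
  rintro y ⟨i, x⟩ y' ⟨i', x'⟩ hadj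
  obtain ⟨-, ⟨hi, hy⟩ | ⟨hi, hy⟩⟩ := (SimpleGraph.fromRel_adj ..).1 hadj
  · exact eq_of_step hi hy
  · exact (eq_of_step hi hy).imp Eq.symm Ne.symm

/-- The part of `K₆₀` outside the matching and the blocks with parameter in `C`. -/
def remainder (C : Finset Row) : SimpleGraph (Shift × Row) :=
  (⊤ \ permGraph matching) \ ⨆ c ∈ C, block c

theorem remainder_adj {C : Finset Row} {u w : Shift × Row} :
    (remainder C).Adj u w ↔
      (u ≠ w ∧ ¬(permGraph matching).Adj u w) ∧ ∀ c ∈ C, ¬(block c).Adj u w := by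
  simp [remainder]

instance (C : Finset Row) : DecidableRel (remainder C).Adj :=
  fun _ _ => decidable_of_iff' _ remainder_adj

theorem isShiftInvariant_remainder (C : Finset Row) : IsShiftInvariant (remainder C) :=
  fun a u w => by
    simp [remainder_adj, matching, IsShiftInvariant.permGraph_addLeft _ a u w, block, Prod.ext_iff]

theorem HWCover.of_remainder {C : Finset Row} {a b : ℕ} (h : HWCover (remainder C) 3 5 a b)
    (t : Row → Fin 4) :
    HWCover (⊤ \ permGraph matching) 3 5 (a + ∑ c ∈ C, triangleCount (t c))
      (b + ∑ c ∈ C, (5 - triangleCount (t c))) :=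
  .mono le_sdiff_sup (h.sup (.biSup (fun c => (hwCover_tripartiteGraph (t c)).block c) C))

theorem hwCover_remainder_univ : HWCover (remainder Finset.univ) 3 5 0 9 := by
  let e : Option (ZMod 9) ≃ ZMod 5 × ZMod 2 := Fintype.equivOfCardEq (by simp)
  let f : ZMod 3 × (Option (ZMod 9) × ZMod 2) ≃ Shift × Row :=
    { toFun p := ((p.1, (e p.2.1).1), ((e p.2.1).2, p.2.2))
      invFun q := (q.1.1, e.symm (q.1.2, q.2.1), q.2.2)
      left_inv p := by simp
      right_inv q := by simp }
  refine .of_right 3 (cycleCover_equipartiteGraph_ten_two.copies f ?_)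
  rintro i ⟨o, s⟩ i' ⟨o', s'⟩ hadj
  have key : ∀ (i i' : ZMod 3) (x x' : ZMod 5) (y y' : Row),
      (remainder Finset.univ).Adj ((i, x), y) ((i', x'), y') → i = i' ∧ (x, y.1) ≠ (x', y'.1) := by
    decide +kernel
  obtain ⟨hi, ho⟩ := key _ _ _ _ _ _ hadj
  exact ⟨hi, fun (hoo : o = o') => ho (by rw [hoo])⟩

/-- Base triangles in `remainder {0, (1, 1)}`; the translates of each group of four by
`{0} × ZMod 5` form a factor. -/
def triangles12 : Fin 4 → Fin 4 → Fin 3 → Shift × Row :=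
  ![![![((0, 0), 1, 0), ((1, 0), 0, 0), ((1, 1), 1, 1)],
      ![((0, 0), 0, 1), ((1, 0), 1, 0), ((2, 1), 0, 0)],
      ![((0, 0), 0, 0), ((0, 2), 1, 1), ((2, 0), 1, 1)],
      ![((1, 0), 0, 1), ((2, 3), 0, 1), ((2, 4), 1, 0)]],
    ![![((0, 0), 0, 0), ((1, 3), 1, 0), ((2, 3), 1, 1)],
      ![((1, 0), 0, 0), ((1, 2), 0, 1), ((1, 4), 1, 1)],
      ![((0, 0), 1, 0), ((0, 0), 0, 1), ((0, 1), 1, 1)],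
      ![((2, 0), 0, 0), ((2, 2), 1, 0), ((2, 3), 0, 1)]],
    ![![((0, 0), 0, 0), ((0, 4), 0, 1), ((1, 3), 0, 1)],
      ![((0, 0), 1, 0), ((0, 3), 1, 1), ((1, 3), 1, 1)],
      ![((1, 0), 1, 0), ((2, 4), 0, 0), ((2, 4), 1, 1)],
      ![((1, 0), 0, 0), ((2, 0), 1, 0), ((2, 2), 0, 1)]],
    ![![((0, 0), 0, 0), ((2, 1), 1, 1), ((2, 2), 1, 0)],
      ![((0, 0), 1, 0), ((2, 1), 0, 0), ((2, 2), 0, 1)],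
      ![((0, 0), 0, 1), ((1, 0), 0, 1), ((1, 2), 1, 0)],
      ![((0, 0), 1, 1), ((1, 1), 1, 1), ((1, 3), 0, 0)]]]

/-- Base pentagons in `remainder {0, (1, 1)}` whose translates by `ZMod 3 × {0}` form a factor. The
edges left over by these and `triangles12` join vertices differing by `((0, ±1), 0)` or
`((0, ±2), 0)`. -/
def pentagons12 : Fin 1 → Fin 4 → Fin 5 → Shift × Row :=
  ![![![((0, 4), 1, 1), ((2, 2), 1, 0), ((1, 1), 0, 0), ((1, 1), 1, 0), ((0, 0), 0, 1)],
      ![((0, 2), 0, 1), ((0, 0), 1, 1), ((2, 1), 1, 1), ((1, 3), 1, 1), ((1, 3), 0, 1)],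
      ![((1, 4), 0, 1), ((2, 1), 0, 1), ((1, 0), 0, 0), ((0, 3), 1, 0), ((0, 4), 0, 0)],
      ![((1, 3), 0, 0), ((1, 4), 1, 0), ((0, 2), 0, 0), ((0, 0), 1, 0), ((0, 2), 1, 1)]]]

set_option synthInstance.maxSize 512 in
theorem hwCover_remainder_twelve_seven : HWCover (remainder {0, (1, 1)}) 3 5 12 7 := by
  have hcover : remainder {0, (1, 1)} ≤ develop triangles12 ⊔ (develop pentagons12 ⊔
      (permGraph (Equiv.addLeft ((0, 1), 0)) ⊔ permGraph (Equiv.addLeft ((0, 2), 0)))) :=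
    (isShiftInvariant_remainder _).le_of_forall_zero
      (.sup (.develop _) (.sup (.develop _) (.sup (.permGraph_addLeft _) (.permGraph_addLeft _))))
      (by decide +kernel)
  have htriangles : CycleCover (develop triangles12) 3 12 :=
    .develop ({0} ×ˢ Finset.univ) (Finset.univ ×ˢ {0}) (by decide) (by decide +kernel)
  have hpentagons : CycleCover (develop pentagons12) 5 5 :=
    .develop (Finset.univ ×ˢ {0}) ({0} ×ˢ Finset.univ) (by decide) (by decide +kernel)
  exact ⟨_, _, hcover, htriangles, hpentagons.sup <|
    .sup (.permGraph <| isUniformCyclic_addLeft_of_prime Nat.prime_five (by decide) (by decide))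
      (.permGraph <| isUniformCyclic_addLeft_of_prime Nat.prime_five (by decide) (by decide))⟩

/-- A factor of `remainder {0, (1, 1)}`, which is meant to be translated by all of `Shift`. -/
def triangles18 : Fin 1 → Fin 20 → Fin 3 → Shift × Row :=
  ![![![((0, 2), 1, 1), ((1, 4), 0, 0), ((2, 4), 1, 0)],
      ![((0, 0), 1, 1), ((0, 2), 1, 0), ((1, 3), 1, 1)],
      ![((0, 2), 0, 0), ((0, 4), 0, 0), ((1, 1), 1, 0)],
      ![((0, 1), 1, 1), ((2, 2), 1, 1), ((2, 4), 1, 1)],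
      ![((0, 1), 0, 1), ((1, 2), 1, 0), ((2, 0), 0, 0)],
      ![((0, 2), 0, 1), ((1, 0), 0, 1), ((2, 0), 0, 1)],
      ![((1, 1), 0, 1), ((1, 4), 0, 1), ((1, 4), 1, 1)],
      ![((0, 0), 0, 0), ((0, 1), 1, 0), ((0, 3), 0, 1)],
      ![((0, 4), 0, 1), ((2, 3), 0, 1), ((2, 4), 0, 0)],
      ![((1, 0), 0, 0), ((1, 0), 1, 0), ((1, 3), 1, 0)],
      ![((1, 0), 1, 1), ((2, 0), 1, 1), ((2, 1), 0, 0)],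
      ![((0, 0), 1, 0), ((0, 1), 0, 0), ((0, 4), 1, 1)],
      ![((0, 3), 1, 0), ((1, 3), 0, 0), ((2, 1), 0, 1)],
      ![((0, 4), 1, 0), ((1, 1), 0, 0), ((1, 1), 1, 1)],
      ![((2, 0), 1, 0), ((2, 1), 1, 1), ((2, 4), 0, 1)],
      ![((1, 3), 0, 1), ((2, 1), 1, 0), ((2, 2), 0, 1)],
      ![((0, 3), 1, 1), ((1, 2), 0, 0), ((2, 3), 1, 0)],
      ![((0, 0), 0, 1), ((1, 4), 1, 0), ((2, 3), 0, 0)],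
      ![((0, 3), 0, 0), ((1, 2), 0, 1), ((2, 2), 1, 0)],
      ![((1, 2), 1, 1), ((2, 2), 0, 0), ((2, 3), 1, 1)]]]

/-- Base triangles in `remainder {0, (1, 1)}` whose translates by `{0} × ZMod 5` form a factor. The
edges left over by these and `triangles18` join vertices differing by `((0, ±1), 0)`. -/
def shortTriangles18 : Fin 1 → Fin 4 → Fin 3 → Shift × Row :=
  ![![![((2, 0), 1, 0), ((2, 2), 1, 1), ((2, 3), 0, 1)],
      ![((1, 0), 0, 0), ((1, 2), 1, 0), ((1, 2), 0, 1)],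
      ![((0, 0), 0, 0), ((0, 1), 0, 1), ((0, 2), 1, 1)],
      ![((2, 0), 0, 0), ((0, 3), 1, 0), ((1, 2), 1, 1)]]]

set_option synthInstance.maxSize 256 in
theorem hwCover_remainder_eighteen_one : HWCover (remainder {0, (1, 1)}) 3 5 18 1 := by
  have hcover : remainder {0, (1, 1)} ≤ develop triangles18 ⊔ develop shortTriangles18 ⊔
      permGraph (Equiv.addLeft ((0, 1), 0)) :=
    (isShiftInvariant_remainder _).le_of_forall_zero
      (.sup (.sup (.develop _) (.develop _)) (.permGraph_addLeft _)) (by decide +kernel)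
  have htriangles : CycleCover (develop triangles18) 3 15 :=
    .develop {0} Finset.univ (by decide) (by decide +kernel)
  have hshort : CycleCover (develop shortTriangles18) 3 3 :=
    .develop ({0} ×ˢ Finset.univ) (Finset.univ ×ˢ {0}) (by decide) (by decide +kernel)
  exact ⟨_, _, hcover, htriangles.sup hshort,
    .permGraph <| isUniformCyclic_addLeft_of_prime Nat.prime_five (by decide) (by decide)⟩

/-- A factor of `remainder {0}`, which is meant to be translated by all of `Shift`. -/
def triangles24 : Fin 1 → Fin 20 → Fin 3 → Shift × Row :=
  ![![![((1, 1), 1, 0), ((1, 1), 0, 1), ((1, 2), 0, 0)],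
      ![((1, 0), 0, 1), ((1, 4), 1, 1), ((2, 2), 0, 0)],
      ![((1, 0), 0, 0), ((1, 1), 0, 0), ((2, 0), 1, 1)],
      ![((0, 0), 0, 0), ((0, 2), 0, 0), ((1, 0), 1, 0)],
      ![((0, 1), 0, 1), ((0, 3), 0, 0), ((0, 3), 1, 1)],
      ![((1, 1), 1, 1), ((1, 3), 0, 0), ((2, 1), 1, 1)],
      ![((0, 2), 1, 0), ((0, 3), 1, 0), ((2, 3), 1, 0)],
      ![((0, 4), 0, 1), ((2, 1), 0, 0), ((2, 2), 1, 1)],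
      ![((1, 3), 1, 0), ((2, 0), 0, 0), ((2, 4), 1, 1)],
      ![((0, 1), 1, 0), ((2, 2), 0, 1), ((2, 4), 0, 1)],
      ![((1, 2), 1, 1), ((1, 3), 1, 1), ((1, 4), 1, 0)],
      ![((0, 0), 1, 1), ((1, 4), 0, 0), ((2, 0), 1, 0)],
      ![((0, 1), 1, 1), ((0, 4), 1, 0), ((2, 2), 1, 0)],
      ![((0, 3), 0, 1), ((2, 3), 0, 1), ((2, 3), 1, 1)],
      ![((0, 0), 0, 1), ((1, 2), 0, 1), ((2, 3), 0, 0)],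
      ![((1, 2), 1, 0), ((1, 3), 0, 1), ((1, 4), 0, 1)],
      ![((0, 1), 0, 0), ((0, 2), 0, 1), ((2, 1), 0, 1)],
      ![((2, 1), 1, 0), ((2, 4), 0, 0), ((2, 4), 1, 0)],
      ![((0, 0), 1, 0), ((0, 4), 0, 0), ((2, 0), 0, 1)],
      ![((0, 2), 1, 1), ((0, 4), 1, 1), ((1, 0), 1, 1)]]]

/-- Base triangles in `remainder {0}`; the translates of each group of four by `{0} × ZMod 5` form a
factor. -/
def shortTriangles24 : Fin 3 → Fin 4 → Fin 3 → Shift × Row :=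
  ![![![((1, 0), 0, 0), ((2, 4), 1, 0), ((0, 2), 1, 0)],
      ![((2, 0), 0, 0), ((1, 0), 1, 1), ((1, 4), 1, 0)],
      ![((0, 0), 0, 0), ((1, 4), 0, 1), ((2, 2), 0, 1)],
      ![((0, 0), 0, 1), ((0, 1), 1, 1), ((2, 2), 1, 1)]],
    ![![((1, 0), 0, 0), ((1, 2), 0, 1), ((0, 3), 1, 1)],
      ![((2, 0), 1, 0), ((2, 3), 0, 1), ((0, 1), 1, 0)],
      ![((0, 0), 0, 0), ((1, 2), 1, 1), ((2, 4), 1, 1)],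
      ![((2, 0), 0, 0), ((0, 0), 0, 1), ((1, 1), 1, 0)]],
    ![![((0, 0), 0, 1), ((0, 3), 1, 1), ((1, 4), 0, 1)],
      ![((2, 0), 0, 0), ((2, 2), 1, 1), ((1, 0), 1, 0)],
      ![((1, 0), 0, 0), ((2, 1), 0, 1), ((2, 2), 1, 0)],
      ![((0, 0), 0, 0), ((0, 3), 1, 0), ((1, 1), 1, 1)]]]

theorem hwCover_remainder_twentyFour_zero : HWCover (remainder {0}) 3 5 24 0 := by
  have hcover : remainder {0} ≤ develop triangles24 ⊔ develop shortTriangles24 :=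
    (isShiftInvariant_remainder _).le_of_forall_zero (.sup (.develop _) (.develop _))
      (by decide +kernel)
  have htriangles : CycleCover (develop triangles24) 3 15 :=
    .develop {0} Finset.univ (by decide) (by decide +kernel)
  have hshort : CycleCover (develop shortTriangles24) 3 9 :=
    .develop ({0} ×ˢ Finset.univ) (Finset.univ ×ˢ {0}) (by decide) (by decide +kernel)
  exact .of_left 5 ((htriangles.sup hshort).mono hcover)

theorem exists_hwCover_remainder {α β : ℕ} (h : α + β = 29) :
    ∃ C a b, HWCover (remainder C) 3 5 a b ∧ ∃ t : Row → Fin 4,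
      a + ∑ c ∈ C, triangleCount (t c) = α ∧ b + ∑ c ∈ C, (5 - triangleCount (t c)) = β := by
  let parts : List (Finset Row × ℕ × ℕ) :=
    [(Finset.univ, 0, 9), ({0, (1, 1)}, 12, 7), ({0, (1, 1)}, 18, 1), ({0}, 24, 0)]
  have hparts : ∀ p ∈ parts, HWCover (remainder p.1) 3 5 p.2.1 p.2.2 := by
    simpa [parts] using ⟨hwCover_remainder_univ, hwCover_remainder_twelve_seven,
      hwCover_remainder_eighteen_one, hwCover_remainder_twentyFour_zero⟩
  have hsum : ∀ α < 30, ∃ p ∈ parts, ∃ t : Row → Fin 4,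
      p.2.1 + ∑ c ∈ p.1, triangleCount (t c) = α ∧
        p.2.2 + ∑ c ∈ p.1, (5 - triangleCount (t c)) = 29 - α := by
    decide +kernel
  obtain ⟨p, hp, t, hα, hβ⟩ := hsum α (by lia)
  exact ⟨p.1, p.2.1, p.2.2, hparts p hp, t, hα, by lia⟩

end SixtyVertices

theorem stmt_15 (α β : ℕ) (h : α + β = 29) : HW 60 3 5 α β := by
  obtain ⟨C, a, b, hrem, t, rfl, rfl⟩ := exists_hwCover_remainder h
  have hmatching : IsUniformCyclic matching 2 :=
    isUniformCyclic_addLeft_of_prime Nat.prime_two (by decide) (by decide)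
  have hcard : Fintype.card (Shift × Row) = 60 := by decide
  rw [← hcard]
  exact HW.of_hwCover hmatching le_rfl (by decide) (by rw [hcard, h]) (hrem.of_remainder t)
end

section
/- For each (α, β) ∈ {(2,8), (4,6), (6,4)}, there exists a 2-factorization of K_21 into α C_3-factors and β C_7-factors. -/
open SimpleGraph

/-!
Orienting every cycle of a factor turns the factor into a permutation `σ` that joins `u` to `σ u`.
Conversely, for a prime `p`, a permutation with `σ ^ p = 1` and without cycles of length one or two
gives a `C_p`-factor. If `N` permutations of `2 * N + 1` points join every pair of points, then they
provide just enough edges to do so: each pair is joined exactly once, and there are no cycles of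
length one or two. So only `σ ^ p = 1` and covering have to be checked. For `K_21` the permutations
are found by taking `ℤ / 21` as the vertex set, combining a few factors invariant under a subgroup
of order three or seven with the translates of starter factors by that subgroup.
-/

section OrbitGraph

variable {V : Type*}

/-- The graph joining each vertex to its image under `f`. When `f` is a permutation whose cycles all
have length at least three, this is the 2-factor formed by the cycles of `f`. -/
def orbitGraph (f : V → V) : SimpleGraph V :=
  SimpleGraph.fromRel fun u v => f u = v

theorem orbitGraph_adj {f : V → V} {u v : V} :
    (orbitGraph f).Adj u v ↔ u ≠ v ∧ (f u = v ∨ f v = u) := by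
  simp only [orbitGraph, fromRel_adj]

theorem exists_eq_of_mem_edgeSet_orbitGraph {f : V → V} {e : Sym2 V}
    (he : e ∈ (orbitGraph f).edgeSet) : ∃ u, s(u, f u) = e := by
  induction e with
  | _ u v =>
    obtain ⟨-, rfl | rfl⟩ := orbitGraph_adj.mp ((mem_edgeSet _).mp he)
    · exact ⟨u, rfl⟩
    · exact ⟨v, Sym2.eq_swap⟩

theorem orbitGraph_reachable_apply (f : V → V) (u : V) : (orbitGraph f).Reachable u (f u) := by
  by_cases h : u = f u
  · rw [← h]
  · exact (orbitGraph_adj.mpr ⟨h, Or.inl rfl⟩).reachable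

theorem orbitGraph_reachable_iff_sameCycle {σ : Equiv.Perm V} {u v : V} :
    (orbitGraph σ).Reachable u v ↔ σ.SameCycle u v := by
  constructor
  · rintro ⟨walk⟩
    induction walk with
    | nil => exact .rfl
    | cons hadj _ ih =>
      obtain ⟨-, rfl | rfl⟩ := orbitGraph_adj.mp hadj
      · exact Equiv.Perm.sameCycle_apply_left.mp ih
      · exact Equiv.Perm.sameCycle_apply_left.mpr ih
  · rintro ⟨i, rfl⟩
    induction i with
    | zero => exact .rfl
    | succ i ih =>
      rw [add_comm, zpow_one_add]
      exact ih.trans (orbitGraph_reachable_apply σ _)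
    | pred i ih =>
      have step := orbitGraph_reachable_apply σ ((σ ^ (-(i : ℤ) - 1)) u)
      rw [← Equiv.Perm.mul_apply, ← zpow_one_add, add_sub_cancel] at step
      exact ih.trans step.symm

theorem ncard_setOf_sameCycle (σ : Equiv.Perm V) (u : V) :
    {v | σ.SameCycle u v}.ncard = Function.minimalPeriod σ u := by
  have orbit_eq : MulAction.orbit (Subgroup.zpowers σ) u = {v | σ.SameCycle u v} := by
    ext v
    simp [MulAction.mem_orbit_iff, Equiv.Perm.SameCycle, Subgroup.smul_def]
  rw [← orbit_eq, ← Nat.card_coe_set_eq,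
    Nat.card_congr (MulAction.orbitZPowersEquiv σ u), Nat.card_zmod]
  rfl

theorem neighborSet_orbitGraph {σ : Equiv.Perm V} {u : V} (hu : σ u ≠ u) :
    (orbitGraph σ).neighborSet u = {σ u, σ⁻¹ u} := by
  ext v
  have hv : v = σ⁻¹ u ↔ σ v = u := Equiv.Perm.eq_inv_iff_eq
  simp only [mem_neighborSet, orbitGraph_adj, Set.mem_insert_iff, Set.mem_singleton_iff, hv]
  grind

theorem ncard_neighborSet_orbitGraph {σ : Equiv.Perm V} {u : V} (hu : σ (σ u) ≠ u) :
    ((orbitGraph σ).neighborSet u).ncard = 2 := by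
  have apply_ne : σ u ≠ u := fun h => hu (by rw [h, h])
  have apply_ne_inv : σ u ≠ σ⁻¹ u := fun h => hu (Equiv.Perm.eq_inv_iff_eq.mp h)
  rw [neighborSet_orbitGraph apply_ne, Set.ncard_pair apply_ne_inv]

theorem ncard_supp_orbitGraph (σ : Equiv.Perm V) (u : V) :
    ((orbitGraph σ).connectedComponentMk u).supp.ncard = Function.minimalPeriod σ u := by
  rw [← ncard_setOf_sameCycle]
  congr 1 with v
  rw [ConnectedComponent.mem_supp_iff, ConnectedComponent.eq, orbitGraph_reachable_iff_sameCycle,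
    Equiv.Perm.sameCycle_comm, Set.mem_ofPred_eq]

theorem isCycleFactor_orbitGraph_of_pow_eq_one {σ : Equiv.Perm V} {p : ℕ} (hp : p.Prime)
    (hpow : σ ^ p = 1) (hσ : ∀ u, σ (σ u) ≠ u) : IsCycleFactor (orbitGraph σ) p := by
  refine ⟨fun u => ncard_neighborSet_orbitGraph (hσ u), fun u => ?_⟩
  have : Fact p.Prime := ⟨hp⟩
  have periodic : Function.IsPeriodicPt σ p u := by
    rw [Function.IsPeriodicPt, Function.IsFixedPt, Equiv.Perm.iterate_eq_pow, hpow,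
      Equiv.Perm.one_apply]
  have not_fixed : ¬ Function.IsFixedPt σ u := fun h => hσ u (by rw [h, h])
  rw [ncard_supp_orbitGraph, Function.minimalPeriod_eq_prime periodic not_fixed]

end OrbitGraph

section Covering

variable {V ι : Type*} [Fintype V] [Fintype ι] {f : ι → V → V}

theorem bijOn_edgeSet_top_of_cover (hcard : Fintype.card V = 2 * Fintype.card ι + 1)
    (hcover : ∀ u v, u ≠ v → ∃ i, f i u = v ∨ f i v = u) :
    Set.BijOn (fun x : ι × V => s(x.2, f x.1 x.2)) Set.univ (⊤ : SimpleGraph V).edgeSet := by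
  classical
  set edge : ι × V → Sym2 V := fun x => s(x.2, f x.1 x.2)
  have subset_image : (⊤ : SimpleGraph V).edgeFinset ⊆ Finset.univ.image edge := by
    intro e he
    induction e with
    | _ u v =>
      obtain ⟨i, rfl | rfl⟩ := hcover u v (by simpa using he)
      · exact Finset.mem_image_of_mem edge (Finset.mem_univ (i, u))
      · exact Finset.mem_image.mpr ⟨(i, v), Finset.mem_univ _, Sym2.eq_swap⟩
  have card_edges : (⊤ : SimpleGraph V).edgeFinset.card = (Finset.univ : Finset (ι × V)).card := by
    rw [card_edgeFinset_top_eq_card_choose_two, Finset.card_univ, Fintype.card_prod, hcard,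
      Nat.choose_two_right, Nat.add_sub_cancel, mul_left_comm, Nat.mul_div_cancel_left _ two_pos,
      mul_comm]
  have image_eq : (⊤ : SimpleGraph V).edgeFinset = Finset.univ.image edge :=
    Finset.eq_of_subset_of_card_le subset_image (card_edges ▸ Finset.card_image_le)
  have edge_inj : Set.InjOn edge (Finset.univ : Finset (ι × V)) :=
    Finset.card_image_iff.mp (image_eq ▸ card_edges)
  rw [← coe_edgeFinset, image_eq, Finset.coe_image, ← Finset.coe_univ]
  exact edge_inj.bijOn_image

theorem apply_apply_ne_of_cover (hcard : Fintype.card V = 2 * Fintype.card ι + 1)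
    (hcover : ∀ u v, u ≠ v → ∃ i, f i u = v ∨ f i v = u) (i : ι) (u : V) :
    f i (f i u) ≠ u := by
  intro h
  have hbij := bijOn_edgeSet_top_of_cover hcard hcover
  have apply_ne : (⊤ : SimpleGraph V).Adj u (f i u) := hbij.mapsTo (Set.mem_univ (i, u))
  have same_edge : s(u, f i u) = s(f i u, f i (f i u)) := by rw [h, Sym2.eq_swap]
  exact apply_ne.ne (congrArg Prod.snd
    (hbij.injOn (Set.mem_univ (i, u)) (Set.mem_univ (i, f i u)) same_edge))

theorem disjoint_edgeSet_orbitGraph_of_cover (hcard : Fintype.card V = 2 * Fintype.card ι + 1)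
    (hcover : ∀ u v, u ≠ v → ∃ i, f i u = v ∨ f i v = u) {i j : ι} (hij : i ≠ j) :
    Disjoint (orbitGraph (f i)).edgeSet (orbitGraph (f j)).edgeSet := by
  refine Set.disjoint_left.mpr fun e hi hj => hij ?_
  obtain ⟨u, hu⟩ := exists_eq_of_mem_edgeSet_orbitGraph hi
  obtain ⟨v, hv⟩ := exists_eq_of_mem_edgeSet_orbitGraph hj
  have edge_inj := (bijOn_edgeSet_top_of_cover hcard hcover).injOn
  exact congrArg Prod.fst
    (edge_inj (Set.mem_univ (i, u)) (Set.mem_univ (j, v)) (hu.trans hv.symm))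

end Covering

theorem isDecompOn_top_orbitGraph_of_cover {V : Type*} [Fintype V] {f : ℕ → V → V} {N : ℕ}
    (hcard : Fintype.card V = 2 * N + 1)
    (hcover : ∀ u v, u ≠ v → ∃ i : Fin N, f i u = v ∨ f i v = u) :
    IsDecompOn ⊤ (fun i => orbitGraph (f i)) N := by
  refine ⟨fun _ _ => le_top, fun i hi j hj hij => ?_, ?_⟩
  · have hN : Fintype.card V = 2 * Fintype.card (Fin N) + 1 := by rw [hcard, Fintype.card_fin]
    exact disjoint_edgeSet_orbitGraph_of_cover (f := fun i : Fin N => f i) hN hcover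
      (i := ⟨i, hi⟩) (j := ⟨j, hj⟩) (by simpa using hij)
  · ext e
    induction e with
    | _ u v =>
      simp only [mem_edgeSet, top_adj, Set.mem_iUnion, Set.mem_Iio, orbitGraph_adj, exists_prop]
      constructor
      · intro huv
        obtain ⟨i, hi⟩ := hcover u v huv
        exact ⟨i, i.isLt, huv, hi⟩
      · rintro ⟨_, _, huv, _⟩
        exact huv

theorem isHWGraph_top_of_cover {V : Type*} [Fintype V] {p q : ℕ} (hp : p.Prime) (hq : q.Prime)
    (L M : List (Equiv.Perm V))
    (hcard : Fintype.card V = 2 * (L.length + M.length) + 1)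
    (hL : ∀ σ ∈ L, σ ^ p = 1) (hM : ∀ σ ∈ M, σ ^ q = 1)
    (hcover : ∀ u v, u ≠ v → ∃ σ ∈ L ++ M, σ u = v ∨ σ v = u) :
    IsHWGraph (⊤ : SimpleGraph V) p q L.length M.length := by
  set σ : ℕ → Equiv.Perm V := fun i => (L ++ M).getD i 1
  have σ_left {i : ℕ} (hi : i < L.length) : σ i ∈ L := by
    simp [σ, List.getElem?_append_left hi, hi]
  have σ_right {i : ℕ} (hLi : L.length ≤ i) (hi : i < L.length + M.length) : σ i ∈ M := by
    have : i - L.length < M.length := by lia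
    simp [σ, List.getElem?_append_right hLi, this]
  have cover (u v : V) (huv : u ≠ v) : ∃ i : Fin (L.length + M.length), σ i u = v ∨ σ i v = u := by
    obtain ⟨τ, hτ, h⟩ := hcover u v huv
    obtain ⟨i, hi, rfl⟩ := List.getElem_of_mem hτ
    exact ⟨⟨i, by simpa using hi⟩, by simpa only [σ, List.getD_eq_getElem _ _ hi] using h⟩
  have apply_apply_ne {i : ℕ} (hi : i < L.length + M.length) (u : V) : σ i (σ i u) ≠ u :=
    apply_apply_ne_of_cover (f := fun i : Fin (L.length + M.length) => σ i)
      (by rw [hcard, Fintype.card_fin]) cover ⟨i, hi⟩ u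
  refine ⟨fun i => orbitGraph (σ i), isDecompOn_top_orbitGraph_of_cover hcard cover,
    fun i hi => ?_, fun i hLi hi => ?_⟩
  · exact isCycleFactor_orbitGraph_of_pow_eq_one hp (hL _ (σ_left hi)) (apply_apply_ne (by lia))
  · exact isCycleFactor_orbitGraph_of_pow_eq_one hq (hM _ (σ_right hLi hi)) (apply_apply_ne hi)

theorem hw_of_cover {v p q : ℕ} (hp : p.Prime) (hq : q.Prime)
    (L M : List (Equiv.Perm (Fin v))) (hv : v = 2 * (L.length + M.length) + 1)
    (hL : ∀ σ ∈ L, σ ^ p = 1) (hM : ∀ σ ∈ M, σ ^ q = 1)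
    (hcover : ∀ a b, a ≠ b → ∃ σ ∈ L ++ M, σ a = b ∨ σ b = a) :
    HW v p q L.length M.length := by
  have v_odd : Odd v := ⟨_, hv⟩
  refine ⟨⊥, fun _ => rfl, fun v_even => absurd v_even (Nat.not_even_iff_odd.mpr v_odd), ?_⟩
  rw [sdiff_bot]
  exact isHWGraph_top_of_cover hp hq L M (by rw [Fintype.card_fin, ← hv]) hL hM hcover

/-- The translates of the permutation `σ` by `0, d, …, (n - 1) • d`: the cycles `(a b c …)` of the
`i`-th one are `(i • d + a, i • d + b, i • d + c, …)`. They develop a starter `σ` under the cyclic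
group generated by `d`. -/
def translates {Γ : Type*} [AddGroup Γ] (d : Γ) (n : ℕ) (σ : Equiv.Perm Γ) :
    List (Equiv.Perm Γ) :=
  (List.range n).map fun i => MulAut.conj (Equiv.addLeft (i • d)) σ

theorem pow_eq_one_of_mem_translates {Γ : Type*} [AddGroup Γ] {d : Γ} {n k : ℕ}
    {σ τ : Equiv.Perm Γ} (hσ : σ ^ k = 1) (hτ : τ ∈ translates d n σ) : τ ^ k = 1 := by
  obtain ⟨i, -, rfl⟩ := List.mem_map.mp hτ
  rw [← map_pow, hσ, map_one]

section TwentyOne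

open Nat (prime_three prime_seven)

open Equiv (Perm addLeft)

/-- The `C_7`-factor of `K_21` that is developed under the subgroup of order seven to obtain seven
of the eight `C_7`-factors in the case `(2, 8)`. -/
def heptagonStarterTwoEight : Perm (Fin 21) :=
  c[0, 12, 18, 17, 8, 15, 5] * c[1, 6, 7, 2, 10, 11, 3] * c[4, 16, 9, 19, 13, 20, 14]

theorem hw_twentyOne_two_eight : HW 21 3 7 2 8 := by
  refine hw_of_cover prime_three prime_seven
    [(translates 3 7 c[0, 13, 17]).prod, (translates 3 7 c[0, 4, 2]).prod]
    (addLeft 3 :: translates 3 7 heptagonStarterTwoEight) rfl ?_ ?_ (by decide +kernel)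
  · exact List.forall_mem_cons.mpr
      ⟨by decide +kernel, List.forall_mem_singleton.mpr (by decide +kernel)⟩
  · have starter_pow : heptagonStarterTwoEight ^ 7 = 1 := by decide +kernel
    exact List.forall_mem_cons.mpr
      ⟨by decide +kernel, fun _ => pow_eq_one_of_mem_translates starter_pow⟩

/-- The `C_3`-factor of `K_21` that is developed under the subgroup of order three to obtain three
of the four `C_3`-factors in the case `(4, 6)`. -/
def triangleStarterFourSix : Perm (Fin 21) :=
  c[0, 15, 9] * c[1, 18, 14] * c[2, 12, 6] * c[3, 7, 8] * c[4, 16, 10] * c[5, 13, 11] *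
    c[17, 19, 20]

/-- The first of the two `C_7`-factors of `K_21` that are developed under the subgroup of order
three to obtain the six `C_7`-factors in the case `(4, 6)`. -/
def heptagonStarterFourSix₁ : Perm (Fin 21) :=
  c[0, 18, 7, 9, 14, 3, 13] * c[1, 10, 8, 16, 6, 15, 12] * c[2, 5, 17, 4, 20, 11, 19]

/-- The second of the two `C_7`-starters in the case `(4, 6)`. -/
def heptagonStarterFourSix₂ : Perm (Fin 21) :=
  c[0, 6, 7, 5, 14, 19, 3] * c[1, 20, 2, 18, 16, 15, 4] * c[8, 12, 11, 10, 9, 17, 13]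

theorem hw_twentyOne_four_six : HW 21 3 7 4 6 := by
  refine hw_of_cover prime_three prime_seven
    (addLeft 7 :: translates 7 3 triangleStarterFourSix)
    (translates 7 3 heptagonStarterFourSix₁ ++ translates 7 3 heptagonStarterFourSix₂)
    rfl ?_ ?_ (by decide +kernel)
  · have starter_pow : triangleStarterFourSix ^ 3 = 1 := by decide +kernel
    exact List.forall_mem_cons.mpr
      ⟨by decide +kernel, fun _ => pow_eq_one_of_mem_translates starter_pow⟩
  · have starter₁_pow : heptagonStarterFourSix₁ ^ 7 = 1 := by decide +kernel
    have starter₂_pow : heptagonStarterFourSix₂ ^ 7 = 1 := by decide +kernel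
    exact List.forall_mem_append.mpr
      ⟨fun _ => pow_eq_one_of_mem_translates starter₁_pow,
        fun _ => pow_eq_one_of_mem_translates starter₂_pow⟩

/-- The first of the two `C_3`-factors of `K_21` that are developed under the subgroup of order
three to obtain the six `C_3`-factors in the case `(6, 4)`. -/
def triangleStarterSixFour₁ : Perm (Fin 21) :=
  c[0, 16, 20] * c[1, 7, 5] * c[2, 3, 19] * c[4, 15, 13] * c[6, 10, 14] * c[8, 17, 9] *
    c[11, 12, 18]

/-- The second of the two `C_3`-starters in the case `(6, 4)`. -/
def triangleStarterSixFour₂ : Perm (Fin 21) :=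
  c[0, 2, 12] * c[1, 15, 14] * c[3, 17, 18] * c[4, 20, 9] * c[5, 19, 6] * c[7, 13, 11] *
    c[8, 16, 10]

/-- The `C_7`-factor of `K_21` that is developed under the subgroup of order three to obtain three
of the four `C_7`-factors in the case `(6, 4)`. -/
def heptagonStarterSixFour : Perm (Fin 21) :=
  c[0, 7, 12, 1, 17, 19, 10] * c[2, 11, 3, 13, 8, 4, 14] * c[5, 20, 6, 15, 9, 16, 18]

theorem hw_twentyOne_six_four : HW 21 3 7 6 4 := by
  refine hw_of_cover prime_three prime_seven
    (translates 7 3 triangleStarterSixFour₁ ++ translates 7 3 triangleStarterSixFour₂)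
    (addLeft 3 :: translates 7 3 heptagonStarterSixFour) rfl ?_ ?_ (by decide +kernel)
  · have starter₁_pow : triangleStarterSixFour₁ ^ 3 = 1 := by decide +kernel
    have starter₂_pow : triangleStarterSixFour₂ ^ 3 = 1 := by decide +kernel
    exact List.forall_mem_append.mpr
      ⟨fun _ => pow_eq_one_of_mem_translates starter₁_pow,
        fun _ => pow_eq_one_of_mem_translates starter₂_pow⟩
  · have starter_pow : heptagonStarterSixFour ^ 7 = 1 := by decide +kernel
    exact List.forall_mem_cons.mpr
      ⟨by decide +kernel, fun _ => pow_eq_one_of_mem_translates starter_pow⟩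

end TwentyOne

theorem stmt_16 : HW 21 3 7 2 8 ∧ HW 21 3 7 4 6 ∧ HW 21 3 7 6 4 := by
  exact ⟨hw_twentyOne_two_eight, hw_twentyOne_four_six, hw_twentyOne_six_four⟩
end
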